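/- arXiv:2409.17267 — 5 statements merged into one kernel-verified Lean document; each statement's English description precedes it below -/
import Mathlib

section
/- Let A ∈ ℝ^{n×n} be symmetric positive definite, b ∈ ℝⁿ, and ε, V ∈ ℝ. Set s = 𝟙ᵀA⁻¹𝟙, t = bᵀA⁻¹𝟙, u = bᵀA⁻¹b, γ = V𝟙 + εb, C = ε²A + γ𝟙ᵀ + ε𝟙bᵀ, and Δ = s(V − u) + (ε + t)². Assume C is invertible, Δ ≠ 0, and ε + t ≠ 0. Then C⁻¹γ = λ·(A⁻¹𝟙/s) + (1 − λ)·(A⁻¹b/(ε + t)), where λ = s(V − u)/Δ; equivalently, C⁻¹γ = ((V − u)·A⁻¹𝟙 + (ε + t)·A⁻¹b)/Δ. -/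
/-!
Write `x = Δ⁻¹ • ((V - u) • A⁻¹𝟙 + (ε + t) • A⁻¹b)`. Since `C` is `ε² A` plus terms of rank one,
`C x` is a combination of `𝟙` and `b` whose coefficients are polynomial in `ε`, `V`, `s`, `t`, `u`
up to the factor `Δ⁻¹`; expanding them gives `C x = γ`, so `x = C⁻¹γ`. The symmetry of `A` enters
through `𝟙ᵀA⁻¹b = t`. The form with weights `lam` and `1 - lam` is a regrouping of the same vector,
using `1 - lam = (ε + t)² / Δ`.
-/

open Matrix

/-- For a symmetric positive definite `A`, the minimal error
aggregation coefficients `C⁻¹γ` decompose as a combination of the minimal variance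
aggregate `A⁻¹𝟙/s` and `A⁻¹b/(ε+t)`. -/
theorem mea_decomposition {n : ℕ}
    (A : Matrix (Fin n) (Fin n) ℝ) (hA : A.PosDef)
    (b : Fin n → ℝ) (ε V : ℝ)
    (s t u : ℝ)
    (hs : s = (1 : Fin n → ℝ) ⬝ᵥ A⁻¹.mulVec 1)
    (ht : t = b ⬝ᵥ A⁻¹.mulVec 1)
    (hu : u = b ⬝ᵥ A⁻¹.mulVec b)
    (γ : Fin n → ℝ) (hγ : γ = V • (1 : Fin n → ℝ) + ε • b)
    (C : Matrix (Fin n) (Fin n) ℝ)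
    (hC : C = ε ^ 2 • A + vecMulVec γ (1 : Fin n → ℝ) + ε • vecMulVec (1 : Fin n → ℝ) b)
    (Δ : ℝ) (hΔ : Δ = s * (V - u) + (ε + t) ^ 2)
    (hCinv : IsUnit C.det) (hΔ0 : Δ ≠ 0) (hεt : ε + t ≠ 0)
    (lam : ℝ) (hlam : lam = s * (V - u) / Δ) :
    C⁻¹.mulVec γ = lam • (s⁻¹ • A⁻¹.mulVec 1) + (1 - lam) • ((ε + t)⁻¹ • A⁻¹.mulVec b) ∧
    C⁻¹.mulVec γ = Δ⁻¹ • ((V - u) • A⁻¹.mulVec 1 + (ε + t) • A⁻¹.mulVec b) := by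
  have hdet : IsUnit A.det := A.isUnit_iff_isUnit_det.mp hA.isUnit
  have hA1 : ∀ v, A.mulVec (A⁻¹.mulVec v) = v := fun v => by
    rw [mulVec_mulVec, mul_nonsing_inv A hdet, one_mulVec]
  have ht' : t = (1 : Fin n → ℝ) ⬝ᵥ A⁻¹.mulVec b := by
    have hsymm : (A⁻¹)ᵀ = A⁻¹ := by
      have h := hA.isHermitian.inv.eq
      rwa [conjTranspose_eq_transpose_of_trivial] at h
    rw [ht, dotProduct_mulVec, ← mulVec_transpose, hsymm, dotProduct_comm]
  have key : C⁻¹.mulVec γ = Δ⁻¹ • ((V - u) • A⁻¹.mulVec 1 + (ε + t) • A⁻¹.mulVec b) := by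
    have hCx : C.mulVec (Δ⁻¹ • ((V - u) • A⁻¹.mulVec 1 + (ε + t) • A⁻¹.mulVec b)) = γ := by
      rw [mulVec_smul, inv_smul_eq_iff₀ hΔ0, hC]
      simp only [add_mulVec, smul_mulVec, mulVec_add, mulVec_smul, vecMulVec_mulVec, hA1,
        ← hs, ← ht, ← ht', ← hu]
      rw [hγ]
      ext i
      simp only [Pi.add_apply, Pi.smul_apply, Pi.one_apply, smul_eq_mul, op_smul_eq_smul]
      rw [hΔ]
      ring
    rw [← hCx, mulVec_mulVec, nonsing_inv_mul C hCinv, one_mulVec]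
  refine ⟨?_, key⟩
  -- For `n = 0` the scalar `s` vanishes, but all vectors are equal.
  rcases Nat.eq_zero_or_pos n with rfl | hn
  · exact Subsingleton.elim _ _
  have hs0 : s ≠ 0 := by
    have : Nonempty (Fin n) := ⟨⟨0, hn⟩⟩
    have h := hA.inv.dotProduct_mulVec_pos (one_ne_zero : (1 : Fin n → ℝ) ≠ 0)
    rw [star_one, ← hs] at h
    exact h.ne'
  have h1 : lam * s⁻¹ = Δ⁻¹ * (V - u) := by
    rw [hlam]
    field_simp
  have h2 : (1 - lam) * (ε + t)⁻¹ = Δ⁻¹ * (ε + t) := by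
    have h : 1 - lam = (ε + t) ^ 2 / Δ := by
      rw [hlam, eq_div_iff hΔ0, sub_mul, div_mul_cancel₀ _ hΔ0, hΔ]
      ring
    rw [h]
    field_simp
  rw [key, smul_smul, smul_smul, h1, h2, smul_add, smul_smul, smul_smul]
end

section
/- Let A ∈ ℝ^{n×n} be symmetric positive definite, b ∈ ℝⁿ, and ε, V ∈ ℝ. Set s = 𝟙ᵀA⁻¹𝟙, t = bᵀA⁻¹𝟙, u = bᵀA⁻¹b, γ = V𝟙 + εb, C = ε²A + γ𝟙ᵀ + ε𝟙bᵀ, and Δ = s(V − u) + (ε + t)². Assume C is invertible and Δ ≠ 0. Then γᵀC⁻¹γ = V − ε²(V − u)/Δ. -/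
/-!
Put `x = C⁻¹γ`, `p = 𝟙ᵀx` and `q = bᵀx`. Since `C` is a rank-two perturbation of `ε²A`, applying `A⁻¹`
to `Cx = γ` and pairing with `𝟙` and `b` gives a closed `2 × 2` linear system for `(p, q)` with
coefficients in `s, t, u, V, ε`. Adding `V - u` times the first equation to `ε + t` times the second
gives `(γᵀx - V)Δ = -ε²(V - u)`, where `γᵀx = Vp + εq`; it remains to divide by `Δ`.
-/

open Matrix

/-- `γᵀC⁻¹γ = V − ε²(V − u)/Δ`. -/
theorem gamma_Cinv_gamma {n : ℕ}
    (A : Matrix (Fin n) (Fin n) ℝ) (hA : A.PosDef)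
    (b : Fin n → ℝ) (ε V : ℝ)
    (s t u : ℝ)
    (hs : s = (1 : Fin n → ℝ) ⬝ᵥ A⁻¹.mulVec 1)
    (ht : t = b ⬝ᵥ A⁻¹.mulVec 1)
    (hu : u = b ⬝ᵥ A⁻¹.mulVec b)
    (γ : Fin n → ℝ) (hγ : γ = V • (1 : Fin n → ℝ) + ε • b)
    (C : Matrix (Fin n) (Fin n) ℝ)
    (hC : C = ε ^ 2 • A + vecMulVec γ (1 : Fin n → ℝ) + ε • vecMulVec (1 : Fin n → ℝ) b)
    (Δ : ℝ) (hΔ : Δ = s * (V - u) + (ε + t) ^ 2)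
    (hCinv : IsUnit C.det) (hΔ0 : Δ ≠ 0) :
    γ ⬝ᵥ C⁻¹.mulVec γ = V - ε ^ 2 * (V - u) / Δ := by
  have hAdet : IsUnit A.det := hA.isUnit.map detMonoidHom
  have hsymm : Aᵀ = A := by
    simpa [conjTranspose_eq_transpose_of_trivial] using hA.isHermitian.eq
  have ht' : (1 : Fin n → ℝ) ⬝ᵥ A⁻¹ *ᵥ b = t := by
    rw [ht, dotProduct_mulVec, ← mulVec_transpose, transpose_nonsing_inv, hsymm, dotProduct_comm]
  set x := C⁻¹ *ᵥ γ with hx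
  have hCx : C *ᵥ x = γ := by
    rw [hx, mulVec_mulVec, mul_nonsing_inv _ hCinv, one_mulVec]
  obtain ⟨p, hp⟩ : ∃ p, p = (1 : Fin n → ℝ) ⬝ᵥ x := ⟨_, rfl⟩
  obtain ⟨q, hq⟩ : ∃ q, q = b ⬝ᵥ x := ⟨_, rfl⟩
  have hCx' : ε ^ 2 • (A *ᵥ x) + p • γ + (ε * q) • (1 : Fin n → ℝ) = γ := by
    conv_rhs => rw [← hCx, hC]
    simp only [add_mulVec, smul_mulVec, vecMulVec_mulVec, op_smul_eq_smul, ← hp, ← hq, smul_smul]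
  have hAx : A⁻¹ *ᵥ (A *ᵥ x) = x := by
    rw [mulVec_mulVec, nonsing_inv_mul _ hAdet, one_mulVec]
  have key := congrArg (fun v => A⁻¹ *ᵥ v) hCx'
  simp only [hγ, mulVec_add, mulVec_smul, hAx] at key
  have e1 := congrArg (fun v => (1 : Fin n → ℝ) ⬝ᵥ v) key
  have e2 := congrArg (fun v => b ⬝ᵥ v) key
  simp only [dotProduct_add, dotProduct_smul, smul_eq_mul, ← hs, ← ht, ← hu, ht', ← hp, ← hq]
    at e1 e2
  have hgoal : γ ⬝ᵥ x = V * p + ε * q := by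
    rw [hp, hq]
    conv_lhs => rw [hγ]
    simp only [add_dotProduct, smul_dotProduct, smul_eq_mul]
  rw [hgoal]
  -- The multipliers come from Cramer's rule in the unknowns `p - 1` and `ε * q`, with the common
  -- factor `ε` of the determinant `ε * Δ` cancelled; hence `ε = 0` needs no separate treatment.
  have hmain : (V * p + ε * q - V) * Δ + ε ^ 2 * (V - u) = 0 := by
    rw [hΔ]
    linear_combination (V - u) * e1 + (ε + t) * e2
  field_simp
  linear_combination hmain
end

section
/- Let A ∈ ℝ^{n×n} be symmetric positive definite, b ∈ ℝⁿ, and ε, V ∈ ℝ. Set s = 𝟙ᵀA⁻¹𝟙, t = bᵀA⁻¹𝟙, u = bᵀA⁻¹b, γ = V𝟙 + εb, C = ε²A + γ𝟙ᵀ + ε𝟙bᵀ, and Δ = s(V − u) + (ε + t)². Assume C is invertible and Δ ≠ 0. Then 𝟙ᵀC⁻¹γ = 1 − ε(ε + t)/Δ. -/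
/-!
The vector `w = x • A⁻¹𝟙 + y • A⁻¹b` with `x = (V - u) / Δ` and `y = (ε + t) / Δ` solves `C w = γ`.
By the definition of `Δ`, `𝟙ᵀw = x s + y t = 1 - ε y`, and `bᵀw = x t + y u`, so
`C w = ε² (x 𝟙 + y b) + (1 - ε y) γ + ε (x t + y u) 𝟙`. Its `b`-coefficient is `ε`, and its
`𝟙`-coefficient is `V` because `x (ε + t) = y (V - u)`. Since `C` is invertible, `C⁻¹γ = w`.
No division by `ε` occurs, so `ε = 0` needs no separate treatment.
-/

open Matrix

/-- `𝟙ᵀC⁻¹γ = 1 − ε(ε + t)/Δ`. -/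
theorem ones_Cinv_gamma {n : ℕ}
    (A : Matrix (Fin n) (Fin n) ℝ) (hA : A.PosDef)
    (b : Fin n → ℝ) (ε V : ℝ)
    (s t u : ℝ)
    (hs : s = (1 : Fin n → ℝ) ⬝ᵥ A⁻¹.mulVec 1)
    (ht : t = b ⬝ᵥ A⁻¹.mulVec 1)
    (hu : u = b ⬝ᵥ A⁻¹.mulVec b)
    (γ : Fin n → ℝ) (hγ : γ = V • (1 : Fin n → ℝ) + ε • b)
    (C : Matrix (Fin n) (Fin n) ℝ)
    (hC : C = ε ^ 2 • A + vecMulVec γ (1 : Fin n → ℝ) + ε • vecMulVec (1 : Fin n → ℝ) b)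
    (Δ : ℝ) (hΔ : Δ = s * (V - u) + (ε + t) ^ 2)
    (hCinv : IsUnit C.det) (hΔ0 : Δ ≠ 0) :
    (1 : Fin n → ℝ) ⬝ᵥ C⁻¹.mulVec γ = 1 - ε * (ε + t) / Δ := by
  have hdet : IsUnit A.det := hA.det_pos.ne'.isUnit
  have hAinvT : A⁻¹ᵀ = A⁻¹ := by
    have h : Aᵀ = A := by simpa using hA.isHermitian.eq
    rw [transpose_nonsing_inv, h]
  have ht_symm : (1 : Fin n → ℝ) ⬝ᵥ A⁻¹.mulVec b = t := by
    rw [ht, dotProduct_mulVec, ← mulVec_transpose, hAinvT, dotProduct_comm]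
  have hA_one : A.mulVec (A⁻¹.mulVec 1) = 1 := by
    rw [mulVec_mulVec, mul_nonsing_inv A hdet, one_mulVec]
  have hA_b : A.mulVec (A⁻¹.mulVec b) = b := by
    rw [mulVec_mulVec, mul_nonsing_inv A hdet, one_mulVec]
  obtain ⟨x, hx⟩ : ∃ x, x = (V - u) / Δ := ⟨_, rfl⟩
  obtain ⟨y, hy⟩ : ∃ y, y = (ε + t) / Δ := ⟨_, rfl⟩
  have hsum : x * s + y * t = 1 - ε * y := by
    rw [hx, hy]
    field_simp
    rw [hΔ]
    ring
  have hxy : x * (ε + t) = y * (V - u) := by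
    rw [hx, hy]
    ring
  obtain ⟨w, hw⟩ : ∃ w, w = x • A⁻¹.mulVec 1 + y • A⁻¹.mulVec b := ⟨_, rfl⟩
  have hone_w : (1 : Fin n → ℝ) ⬝ᵥ w = 1 - ε * y := by
    rw [hw, dotProduct_add, dotProduct_smul, dotProduct_smul, ← hs, ht_symm, ← hsum]
    simp only [smul_eq_mul]
  have hb_w : b ⬝ᵥ w = x * t + y * u := by
    rw [hw, dotProduct_add, dotProduct_smul, dotProduct_smul, ← ht, ← hu]
    simp only [smul_eq_mul]
  have hA_w : A.mulVec w = x • 1 + y • b := by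
    rw [hw, mulVec_add, mulVec_smul, mulVec_smul, hA_one, hA_b]
  have hC_w : C.mulVec w = γ := by
    rw [hC, add_mulVec, add_mulVec, smul_mulVec, smul_mulVec, vecMulVec_mulVec,
      vecMulVec_mulVec, hone_w, hb_w, hA_w, hγ]
    ext i
    simp only [Pi.add_apply, Pi.smul_apply, Pi.one_apply, smul_eq_mul, op_smul_eq_smul]
    -- The coefficients of `b i` agree identically; those of `1` differ by `ε` times `hxy`.
    linear_combination ε * hxy
  rw [← hC_w, mulVec_mulVec, nonsing_inv_mul C hCinv, one_mulVec, hone_w, hy, mul_div_assoc]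
end

section
/- Let A ∈ ℝ^{n×n} be symmetric positive definite, b ∈ ℝⁿ, and ε, V ∈ ℝ with ε ≠ 0. Set s = 𝟙ᵀA⁻¹𝟙, t = bᵀA⁻¹𝟙, v = Vs + εt, and D₀ = ε²A + (V𝟙 + εb)𝟙ᵀ, and assume ε² + v ≠ 0. Then D₀⁻¹𝟙 = α·A⁻¹𝟙 + β·A⁻¹b and D₀⁻¹b = δ·A⁻¹𝟙 + ζ·A⁻¹b, where α = (ε² + εt)/(ε²(ε² + v)), β = −s/(ε(ε² + v)), δ = −Vt/(ε²(ε² + v)), and ζ = (ε² + Vs)/(ε²(ε² + v)). -/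
open Matrix

/-!
`D₀` is a rank-one perturbation of `ε²A`, so
`D₀ (p A⁻¹𝟙 + q A⁻¹b) = ε² (p 𝟙 + q b) + (p s + q t) (V 𝟙 + ε b)`, where `𝟙ᵀA⁻¹b = t` by symmetry
of `A`. With the stated coefficients the right-hand side is `𝟙`, respectively `b`. It remains to
see that `D₀` is invertible: if `D₀ x = 0`, pairing with `A⁻¹𝟙` gives `(ε² + v) 𝟙ᵀx = 0`, hence
`𝟙ᵀx = 0`, then `ε² A x = 0` and `x = 0`.
-/

/-- Coefficients expressing `D₀⁻¹𝟙` and `D₀⁻¹b` in the span of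
`A⁻¹𝟙` and `A⁻¹b` (Appendix A.1 of the paper). -/
theorem D0_inv_coefficients {n : ℕ}
    (A : Matrix (Fin n) (Fin n) ℝ) (hA : A.PosDef)
    (b : Fin n → ℝ) (ε V : ℝ) (hε : ε ≠ 0)
    (s t : ℝ)
    (hs : s = (1 : Fin n → ℝ) ⬝ᵥ A⁻¹.mulVec 1)
    (ht : t = b ⬝ᵥ A⁻¹.mulVec 1)
    (v : ℝ) (hv : v = V * s + ε * t)
    (D₀ : Matrix (Fin n) (Fin n) ℝ)
    (hD₀ : D₀ = ε ^ 2 • A + vecMulVec (V • (1 : Fin n → ℝ) + ε • b) (1 : Fin n → ℝ))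
    (hεv : ε ^ 2 + v ≠ 0) :
    D₀⁻¹.mulVec 1 =
      ((ε ^ 2 + ε * t) / (ε ^ 2 * (ε ^ 2 + v))) • A⁻¹.mulVec 1 +
        (-(s / (ε * (ε ^ 2 + v)))) • A⁻¹.mulVec b ∧
    D₀⁻¹.mulVec b =
      (-(V * t) / (ε ^ 2 * (ε ^ 2 + v))) • A⁻¹.mulVec 1 +
        ((ε ^ 2 + V * s) / (ε ^ 2 * (ε ^ 2 + v))) • A⁻¹.mulVec b := by
  have hdet : IsUnit A.det := (Matrix.isUnit_iff_isUnit_det A).1 hA.isUnit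
  have hAT : Aᵀ = A := by simpa using hA.isHermitian.eq
  have hmul : ∀ y, A *ᵥ (A⁻¹ *ᵥ y) = y := fun y => by
    rw [mulVec_mulVec, mul_nonsing_inv A hdet, one_mulVec]
  have hsymm : ∀ x y : Fin n → ℝ, x ⬝ᵥ A⁻¹ *ᵥ y = y ⬝ᵥ A⁻¹ *ᵥ x := fun x y => by
    rw [dotProduct_mulVec, ← mulVec_transpose, transpose_nonsing_inv, hAT, dotProduct_comm]
  have hD : ∀ x, D₀ *ᵥ x = ε ^ 2 • (A *ᵥ x) + (1 ⬝ᵥ x) • (V • (1 : Fin n → ℝ) + ε • b) := by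
    intro x
    rw [hD₀, add_mulVec, smul_mulVec, vecMulVec_mulVec]
    simp
  have hinj : Function.Injective D₀.mulVec := by
    refine (injective_iff_map_eq_zero D₀.mulVecLin).2 fun x hx => ?_
    rw [mulVecLin_apply, hD] at hx
    have hpair : (A⁻¹ *ᵥ 1) ⬝ᵥ (A *ᵥ x) = 1 ⬝ᵥ x := by
      rw [dotProduct_mulVec, ← mulVec_transpose, hAT, hmul]
    have h1 : (1 ⬝ᵥ x) * (ε ^ 2 + v) = 0 := by
      have := congrArg (fun y => (A⁻¹ *ᵥ 1) ⬝ᵥ y) hx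
      simp only [dotProduct_add, dotProduct_smul, hpair, dotProduct_zero, smul_eq_mul,
        dotProduct_comm (A⁻¹ *ᵥ 1) 1, dotProduct_comm (A⁻¹ *ᵥ 1) b, ← hs, ← ht] at this
      rw [hv]
      linarith
    have h2 : 1 ⬝ᵥ x = 0 := (mul_eq_zero.1 h1).resolve_right hεv
    rw [h2, zero_smul, add_zero] at hx
    have h3 : A *ᵥ x = 0 := (smul_eq_zero.1 hx).resolve_left (pow_ne_zero 2 hε)
    rw [← one_mulVec x, ← nonsing_inv_mul A hdet, ← mulVec_mulVec, h3, mulVec_zero]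
  have hDdet : IsUnit D₀.det :=
    (Matrix.isUnit_iff_isUnit_det D₀).1 (mulVec_injective_iff_isUnit.1 hinj)
  have hsolve : ∀ x y, D₀ *ᵥ x = y → D₀⁻¹ *ᵥ y = x := by
    rintro x _ rfl
    rw [mulVec_mulVec, nonsing_inv_mul D₀ hDdet, one_mulVec]
  have hcomb : ∀ p q : ℝ, D₀ *ᵥ (p • A⁻¹ *ᵥ 1 + q • A⁻¹ *ᵥ b) =
      ε ^ 2 • (p • 1 + q • b) + (p * s + q * t) • (V • (1 : Fin n → ℝ) + ε • b) := by
    intro p q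
    rw [hD, mulVec_add, mulVec_smul, mulVec_smul, hmul, hmul, dotProduct_add, dotProduct_smul,
      dotProduct_smul, hsymm 1 b, ← hs, ← ht, smul_eq_mul, smul_eq_mul]
  subst hv
  constructor
  all_goals
    apply hsolve
    rw [hcomb]
    ext i
    simp only [Pi.add_apply, Pi.smul_apply, Pi.one_apply, smul_eq_mul]
    field_simp
    ring
end

section
/- Let A ∈ ℝ^{n×n} be symmetric positive definite and 𝟙 ∈ ℝⁿ the all-ones vector, and set s = 𝟙ᵀA⁻¹𝟙. Define f on the open set of invertible matrices B ∈ ℝ^{n×n} by f(B) = (𝟙ᵀB⁻¹AB⁻¹𝟙)/(𝟙ᵀB⁻¹𝟙)². Then f(A) = 1/s, f is Fréchet differentiable at A, and its Fréchet derivative at A is the zero linear map: for every H ∈ ℝ^{n×n}, the directional derivative of f at A in direction H is 0. -/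
/-!
Write `ℓ M = 𝟙ᵀM𝟙` and let `D` be the derivative of matrix inversion at `A`. The numerator
`ℓ (B⁻¹AB⁻¹)` has derivative `H ↦ ℓ (A⁻¹ A (D H) + (D H) A A⁻¹) = 2 ℓ (D H)` at `A`, and value
`ℓ A⁻¹ = s`; the denominator `(ℓ B⁻¹)²` has derivative `H ↦ 2 s ℓ (D H)` and value `s²`. The
quotient rule then gives `(2 ℓ (D H) s² - s · 2 s ℓ (D H)) / s⁴ = 0`. Positive definiteness gives
`s > 0` as soon as `n ≠ 0`; for `n = 0` everything is trivially zero.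
-/

open Matrix

attribute [local instance] Matrix.frobeniusNormedAddCommGroup Matrix.frobeniusNormedSpace

attribute [local instance] Matrix.frobeniusNormedRing Matrix.frobeniusNormedAlgebra

/-- The linear functional `M ↦ 𝟙ᵀM𝟙`, i.e. the sum of all entries of `M`. -/
noncomputable def sumEntries (n : ℕ) : Matrix (Fin n) (Fin n) ℝ →L[ℝ] ℝ :=
  LinearMap.toContinuousLinearMap
    { toFun := fun M => (1 : Fin n → ℝ) ⬝ᵥ M.mulVec 1
      map_add' := fun M N => by rw [Matrix.add_mulVec, dotProduct_add]
      map_smul' := fun c M => by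
        rw [Matrix.smul_mulVec, dotProduct_smul, RingHom.id_apply] }

lemma sumEntries_apply {n : ℕ} (M : Matrix (Fin n) (Fin n) ℝ) :
    sumEntries n M = (1 : Fin n → ℝ) ⬝ᵥ M.mulVec 1 := rfl

lemma exists_hasFDerivAt_inv {n : ℕ} {A : Matrix (Fin n) (Fin n) ℝ} (hA : IsUnit A) :
    ∃ D : Matrix (Fin n) (Fin n) ℝ →L[ℝ] Matrix (Fin n) (Fin n) ℝ,
      HasFDerivAt (fun B : Matrix (Fin n) (Fin n) ℝ => B⁻¹) D A := by
  have : CompleteSpace (Matrix (Fin n) (Fin n) ℝ) := FiniteDimensional.complete ℝ _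
  obtain ⟨u, rfl⟩ := hA
  refine ⟨_, (hasFDerivAt_ringInverse (𝕜 := ℝ) u).congr_of_eventuallyEq
    (Filter.Eventually.of_forall fun B => ?_)⟩
  exact Matrix.nonsing_inv_eq_ringInverse B

/-- The true variance `f(B) = (𝟙ᵀB⁻¹AB⁻¹𝟙)/(𝟙ᵀB⁻¹𝟙)²` of the
plug-in minimal variance aggregate satisfies `f(A) = 1/s` and is Fréchet
differentiable at `A` with zero derivative (so every directional derivative at `A`
vanishes). -/
theorem mva_first_order_stability {n : ℕ}
    (A : Matrix (Fin n) (Fin n) ℝ) (hA : A.PosDef)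
    (s : ℝ) (hs : s = (1 : Fin n → ℝ) ⬝ᵥ A⁻¹.mulVec 1)
    (f : Matrix (Fin n) (Fin n) ℝ → ℝ)
    (hf : f = fun B =>
      ((1 : Fin n → ℝ) ⬝ᵥ (B⁻¹ * A * B⁻¹).mulVec 1) /
        ((1 : Fin n → ℝ) ⬝ᵥ B⁻¹.mulVec 1) ^ 2) :
    f A = 1 / s ∧
    HasFDerivAt f (0 : Matrix (Fin n) (Fin n) ℝ →L[ℝ] ℝ) A := by
  have hu : IsUnit A := hA.isUnit
  have hdet : IsUnit A.det := (Matrix.isUnit_iff_isUnit_det A).1 hu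
  have hl : A⁻¹ * A = 1 := Matrix.nonsing_inv_mul A hdet
  have hr : A * A⁻¹ = 1 := Matrix.mul_nonsing_inv A hdet
  rcases Nat.eq_zero_or_pos n with rfl | hn
  · have hs0 : s = 0 := by rw [hs]; simp [dotProduct]
    have hf0 : f = fun _ => 0 := by
      rw [hf]; funext B; simp [dotProduct]
    rw [hf0, hs0]
    exact ⟨by simp, hasFDerivAt_const _ _⟩
  have hspos : 0 < s := by
    have hne : (1 : Fin n → ℝ) ≠ 0 := fun h => one_ne_zero (congrFun h ⟨0, hn⟩)
    have := hA.inv.dotProduct_mulVec_pos hne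
    rw [hs]
    simpa using this
  have hs' : sumEntries n A⁻¹ = s := hs.symm
  have hsne : s ≠ 0 := hspos.ne'
  obtain ⟨D, hD⟩ := exists_hasFDerivAt_inv hu
  have hden := ((sumEntries n).hasFDerivAt.comp A hD).pow 2
  have hnum := (sumEntries n).hasFDerivAt.comp A ((hD.mul_const' A).mul' hD)
  have hnum' : HasFDerivAt (fun B : Matrix (Fin n) (Fin n) ℝ => sumEntries n (B⁻¹ * A * B⁻¹))
      ((2 : ℝ) • (sumEntries n ∘SL D)) A := by
    refine HasFDerivAt.congr_fderiv hnum ?_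
    ext1 H
    change sumEntries n (A⁻¹ * A * D H + D H * A * A⁻¹) = 2 * sumEntries n (D H)
    rw [hl, one_mul, Matrix.mul_assoc, hr, mul_one, map_add, two_mul]
  have hfA : f = fun B => sumEntries n (B⁻¹ * A * B⁻¹) / (sumEntries n B⁻¹) ^ 2 := hf
  constructor
  · rw [hfA]
    simp only [hl, one_mul, hs']
    field_simp
  · rw [hfA]
    have hne : sumEntries n A⁻¹ ^ 2 ≠ 0 := by
      rw [hs']
      exact pow_ne_zero 2 hsne
    have hinv := (hasDerivAt_inv hne).comp_hasFDerivAt A hden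
    simp only [div_eq_mul_inv]
    refine (HasFDerivAt.mul hnum' hinv).congr_fderiv ?_
    ext1 H
    change sumEntries n (A⁻¹ * A * A⁻¹) *
        (-((sumEntries n A⁻¹ ^ 2) ^ 2)⁻¹ *
          ((2 • sumEntries n A⁻¹ ^ (2 - 1)) * sumEntries n (D H))) +
        (sumEntries n A⁻¹ ^ 2)⁻¹ * (2 * sumEntries n (D H)) = 0
    rw [hl, one_mul, hs', nsmul_eq_mul]
    norm_num
    field_simp
    ring
end
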